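/- For each n ≥ 1 let 𝒯_n ⊆ M_n(ℂ) be the complex vector space of n×n Toeplitz matrices (matrices T with T_{jl} depending only on j−l), and let S(𝒯_n) be the set of linear functionals φ : 𝒯_n → ℂ with φ(I) = 1 and φ(T) ≥ 0 for every positive semidefinite T ∈ 𝒯_n, equipped with the distance d_n(φ, ψ) = sup { |φ(T) − ψ(T)| : T ∈ 𝒯_n, ‖δ_n(T)‖ ≤ 1 }, where δ_n(T) is the matrix with entries (j−l)T_{jl} and ‖·‖ is the ℓ² operator norm. Let P(S¹) be the set of Borel probability measures on the circle AddCircle (2π), equipped with the Kantorovich distance d(μ, ν) = sup { |∫ f dμ − ∫ f dν| : f : AddCircle (2π) → ℝ is 1-Lipschitz for the arc-length metric }. Then each (S(𝒯_n), d_n) is a nonempty compact metric space, (P(S¹), d) is a nonempty compact metric space, and (S(𝒯_n), d_n) converges to (P(S¹), d) in Gromov–Hausdorff distance as n → ∞. -/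

import Mathlib

open MeasureTheory Filter
open scoped ComplexOrder

instance : Fact (0 < 2 * Real.pi) := ⟨by positivity⟩

/-- The space `𝒯_n ⊆ M_n(ℂ)` of `n×n` Toeplitz matrices: `T_{jl}` depends only on `j − l`. -/
noncomputable def toeplitzSubmodule (n : ℕ) : Submodule ℂ (Matrix (Fin n) (Fin n) ℂ) where
  carrier := {T | ∀ j l j' l' : Fin n,
    ((j : ℕ) : ℤ) - ((l : ℕ) : ℤ) = ((j' : ℕ) : ℤ) - ((l' : ℕ) : ℤ) → T j l = T j' l'}
  add_mem' := by
    intro a b ha hb j l j' l' h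
    simp only [Matrix.add_apply, ha j l j' l' h, hb j l j' l' h]
  zero_mem' := by intro j l j' l' h; rfl
  smul_mem' := by
    intro c a ha j l j' l' h
    simp only [Matrix.smul_apply, ha j l j' l' h]

lemma one_mem_toeplitzSubmodule (n : ℕ) :
    (1 : Matrix (Fin n) (Fin n) ℂ) ∈ toeplitzSubmodule n := by
  intro j l j' l' h
  by_cases hjl : j = l
  · have : j' = l' := by
      apply Fin.ext
      have h1 : (j : ℕ) = (l : ℕ) := by rw [hjl]
      omega
    simp [Matrix.one_apply, hjl, this]
  · have : j' ≠ l' := by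
      intro hc
      apply hjl
      apply Fin.ext
      have h1 : (j' : ℕ) = (l' : ℕ) := by rw [hc]
      omega
    simp [Matrix.one_apply, hjl, this]

/-- The identity matrix, as an element of the Toeplitz operator system. -/
noncomputable def toeplitzOne (n : ℕ) : toeplitzSubmodule n :=
  ⟨1, one_mem_toeplitzSubmodule n⟩

/-- A state on the Toeplitz operator system `𝒯_n`: a linear functional `φ` with `φ(I) = 1`
which is nonnegative on positive semidefinite Toeplitz matrices. -/
noncomputable def ToeplitzState (n : ℕ) : Type :=
  {φ : toeplitzSubmodule n →ₗ[ℂ] ℂ //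
    φ (toeplitzOne n) = 1 ∧
    ∀ T : toeplitzSubmodule n, (T : Matrix (Fin n) (Fin n) ℂ).PosSemidef → 0 ≤ φ T}

/-- The operator norm of an `n×n` complex matrix acting on `ℓ²`. -/
noncomputable def l2OpNorm {n : ℕ} (M : Matrix (Fin n) (Fin n) ℂ) : ℝ :=
  ‖Matrix.toEuclideanCLM (𝕜 := ℂ) M‖

/-- The matrix `δ_n(T)` with entries `(j−l)·T_{jl}`. -/
noncomputable def deltaMat (n : ℕ) (T : Matrix (Fin n) (Fin n) ℂ) :
    Matrix (Fin n) (Fin n) ℂ :=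
  Matrix.of fun j l => (((((j : ℕ) : ℤ) - ((l : ℕ) : ℤ)) : ℤ) : ℂ) * T j l

/-- Connes' distance on the state space of the Toeplitz operator system:
`d_n(φ, ψ) = sup { |φ(T) − ψ(T)| : T ∈ 𝒯_n, ‖δ_n(T)‖ ≤ 1 }`. -/
noncomputable def toeplitzStateDist (n : ℕ) (φ ψ : ToeplitzState n) : ℝ :=
  sSup {r : ℝ | ∃ T : toeplitzSubmodule n,
    l2OpNorm (deltaMat n (T : Matrix (Fin n) (Fin n) ℂ)) ≤ 1 ∧ r = ‖φ.1 T - ψ.1 T‖}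

/-- The Kantorovich distance on Borel probability measures on the circle:
`d(μ, ν) = sup { |∫ f dμ − ∫ f dν| : f 1-Lipschitz }`. -/
noncomputable def kantorovichDist
    (μ ν : ProbabilityMeasure (AddCircle (2 * Real.pi))) : ℝ :=
  sSup {r : ℝ | ∃ f : AddCircle (2 * Real.pi) → ℝ, LipschitzWith 1 f ∧
    r = |(∫ x, f x ∂(μ : Measure (AddCircle (2 * Real.pi))))
        - ∫ x, f x ∂(ν : Measure (AddCircle (2 * Real.pi)))|}

section OperatorNorm
open scoped Matrix.Norms.L2Operator MatrixOrder

lemma l2OpNorm_eq {n : ℕ} (M : Matrix (Fin n) (Fin n) ℂ) : l2OpNorm M = ‖M‖ := rfl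

lemma l2OpNorm_nonneg {n : ℕ} (M : Matrix (Fin n) (Fin n) ℂ) : 0 ≤ l2OpNorm M := norm_nonneg _

lemma l2OpNorm_smul {n : ℕ} (c : ℂ) (M : Matrix (Fin n) (Fin n) ℂ) :
    l2OpNorm (c • M) = ‖c‖ * l2OpNorm M := by
  simp only [l2OpNorm_eq]; exact norm_smul c M

lemma l2OpNorm_add_le {n : ℕ} (M N : Matrix (Fin n) (Fin n) ℂ) :
    l2OpNorm (M + N) ≤ l2OpNorm M + l2OpNorm N := by
  simp only [l2OpNorm_eq]; exact norm_add_le _ _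

lemma l2OpNorm_conjTranspose {n : ℕ} (M : Matrix (Fin n) (Fin n) ℂ) :
    l2OpNorm M.conjTranspose = l2OpNorm M := Matrix.l2_opNorm_conjTranspose M

lemma posSemidef_norm_sub {n : ℕ} (H : Matrix (Fin n) (Fin n) ℂ) (h : H.IsHermitian) :
    ((l2OpNorm H : ℂ) • (1 : Matrix (Fin n) (Fin n) ℂ) - H).PosSemidef := by
  rw [← Matrix.le_iff]
  have := IsSelfAdjoint.le_algebraMap_norm_self (a := H) h
  refine this.trans (le_of_eq ?_)
  rw [Algebra.algebraMap_eq_smul_one]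
  rfl

end OperatorNorm

lemma l2OpNorm_mulVec_sq {n : ℕ} (M : Matrix (Fin n) (Fin n) ℂ) (y : Fin n → ℂ) :
    ∑ j, ‖(M.mulVec y) j‖ ^ 2 ≤ (l2OpNorm M) ^ 2 * ∑ j, ‖y j‖ ^ 2 := by
  have h := (Matrix.toEuclideanCLM (𝕜 := ℂ) M).le_opNorm (WithLp.toLp 2 y)
  rw [Matrix.toEuclideanCLM_toLp] at h
  have h2 := pow_le_pow_left₀ (norm_nonneg _) h 2
  rw [mul_pow, EuclideanSpace.norm_sq_eq, EuclideanSpace.norm_sq_eq] at h2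
  exact h2

lemma l2OpNorm_le_of_sq {n : ℕ} (M : Matrix (Fin n) (Fin n) ℂ) (C : ℝ) (hC : 0 ≤ C)
    (h : ∀ y : Fin n → ℂ, ∑ j, ‖(M.mulVec y) j‖ ^ 2 ≤ C ^ 2 * ∑ j, ‖y j‖ ^ 2) :
    l2OpNorm M ≤ C := by
  refine ContinuousLinearMap.opNorm_le_bound _ hC fun y => ?_
  have := h (WithLp.ofLp y)
  rw [← sq_le_sq₀ (norm_nonneg _) (by positivity), mul_pow, EuclideanSpace.norm_sq_eq,
    EuclideanSpace.norm_sq_eq]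
  exact this

lemma col_norm_le {n : ℕ} (M : Matrix (Fin n) (Fin n) ℂ) (l : Fin n) :
    ∑ j, ‖M j l‖ ^ 2 ≤ (l2OpNorm M) ^ 2 := by
  have h := l2OpNorm_mulVec_sq M (Pi.single l 1)
  simp only [Matrix.mulVec_single_one, Matrix.col_apply] at h
  have h2 : ∑ j, ‖(Pi.single l 1 : Fin n → ℂ) j‖ ^ 2 = 1 := by
    rw [Finset.sum_eq_single l]
    · simp
    · intro b _ hb; simp [hb]
    · simp
  rw [h2, mul_one] at h
  exact h

lemma entry_norm_le {n : ℕ} (M : Matrix (Fin n) (Fin n) ℂ) (j l : Fin n) :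
    ‖M j l‖ ≤ l2OpNorm M := by
  rw [← sq_le_sq₀ (norm_nonneg _) (l2OpNorm_nonneg M)]
  refine le_trans ?_ (col_norm_le M l)
  exact Finset.single_le_sum (f := fun j => ‖M j l‖ ^ 2) (fun i _ => by positivity)
    (Finset.mem_univ j)

/-- A crude Schur multiplier bound. -/
lemma schur_bound {n : ℕ} (M N : Matrix (Fin n) (Fin n) ℂ) (c : ℝ) (hc : 0 ≤ c)
    (h : ∀ j l, ‖M j l‖ ≤ c * ‖N j l‖) :
    l2OpNorm M ≤ c * Real.sqrt n * l2OpNorm N := by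
  refine l2OpNorm_le_of_sq _ _ (mul_nonneg (by positivity) (l2OpNorm_nonneg N)) fun y => ?_
  have h1 : ∀ j, ‖(M.mulVec y) j‖ ^ 2 ≤ n * ∑ l, c ^ 2 * (‖N j l‖ ^ 2 * ‖y l‖ ^ 2) := by
    intro j
    have h2 : ‖(M.mulVec y) j‖ ≤ ∑ l, ‖M j l * y l‖ := by
      rw [Matrix.mulVec, dotProduct]; exact norm_sum_le _ _
    have h3 := pow_le_pow_left₀ (norm_nonneg _) h2 2
    refine h3.trans ?_
    have h4 := sq_sum_le_card_mul_sum_sq (s := Finset.univ) (f := fun l => ‖M j l * y l‖)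
    simp only [Finset.card_univ, Fintype.card_fin] at h4
    refine h4.trans ?_
    gcongr with l
    rw [norm_mul, mul_pow, ← mul_assoc, ← mul_pow c]
    gcongr
    exact h j l
  calc ∑ j, ‖(M.mulVec y) j‖ ^ 2
      ≤ ∑ j, n * ∑ l, c ^ 2 * (‖N j l‖ ^ 2 * ‖y l‖ ^ 2) := Finset.sum_le_sum fun j _ => h1 j
    _ = n * c ^ 2 * ∑ l, (∑ j, ‖N j l‖ ^ 2) * ‖y l‖ ^ 2 := by
        rw [← Finset.mul_sum, Finset.sum_comm, mul_assoc, Finset.mul_sum (a := c ^ 2)]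
        congr 1
        refine Finset.sum_congr rfl fun l _ => ?_
        rw [Finset.sum_mul, Finset.mul_sum]
    _ ≤ n * c ^ 2 * ∑ l, (l2OpNorm N) ^ 2 * ‖y l‖ ^ 2 := by
        gcongr with l
        exact col_norm_le N l
    _ = (c * Real.sqrt n * l2OpNorm N) ^ 2 * ∑ j, ‖y j‖ ^ 2 := by
        rw [← Finset.mul_sum, mul_pow, mul_pow, Real.sq_sqrt (Nat.cast_nonneg n)]; ring

lemma re_form_le {n : ℕ} (M : Matrix (Fin n) (Fin n) ℂ) (y : Fin n → ℂ) :
    ‖∑ j, star (y j) * (M.mulVec y) j‖ ≤ l2OpNorm M * ∑ j, ‖y j‖ ^ 2 := by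
  have h := norm_inner_le_norm (𝕜 := ℂ) (WithLp.toLp 2 y : EuclideanSpace ℂ (Fin n))
    (Matrix.toEuclideanCLM (𝕜 := ℂ) M (WithLp.toLp 2 y))
  rw [Matrix.toEuclideanCLM_toLp] at h
  have h1 : inner ℂ (WithLp.toLp 2 y : EuclideanSpace ℂ (Fin n)) (WithLp.toLp 2 (M.mulVec y))
      = ∑ j, star (y j) * (M.mulVec y) j := by
    rw [PiLp.inner_apply]
    refine Finset.sum_congr rfl fun j _ => ?_
    simp [mul_comm]
  rw [h1] at h
  refine h.trans ?_
  have h2 := (Matrix.toEuclideanCLM (𝕜 := ℂ) M).le_opNorm (WithLp.toLp 2 y)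
  rw [Matrix.toEuclideanCLM_toLp] at h2
  calc _ ≤ ‖(WithLp.toLp 2 y : EuclideanSpace ℂ (Fin n))‖ * (l2OpNorm M * ‖(WithLp.toLp 2 y : EuclideanSpace ℂ (Fin n))‖) := by
        gcongr; exact h2
    _ = l2OpNorm M * ‖(WithLp.toLp 2 y : EuclideanSpace ℂ (Fin n))‖ ^ 2 := by ring
    _ = _ := by rw [EuclideanSpace.norm_sq_eq]

/-- The Toeplitz matrix with symbol sequence `c`. -/
noncomputable def toep (n : ℕ) : (ℤ → ℂ) →ₗ[ℂ] toeplitzSubmodule n where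
  toFun c := ⟨Matrix.of fun j l => c (((j : ℕ) : ℤ) - ((l : ℕ) : ℤ)), by
    intro j l j' l' h
    simp only [Matrix.of_apply, h]⟩
  map_add' c d := by ext j l; rfl
  map_smul' c d := by ext j l; rfl

lemma toep_apply (n : ℕ) (c : ℤ → ℂ) (j l : Fin n) :
    (toep n c : Matrix (Fin n) (Fin n) ℂ) j l = c (((j : ℕ) : ℤ) - ((l : ℕ) : ℤ)) := rfl

lemma toep_surj (n : ℕ) (T : toeplitzSubmodule n) : ∃ c, T = toep n c := by
  classical
  refine ⟨fun k => if h : ∃ p : Fin n × Fin n, ((p.1 : ℕ) : ℤ) - ((p.2 : ℕ) : ℤ) = k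
    then (T : Matrix (Fin n) (Fin n) ℂ) h.choose.1 h.choose.2 else 0, ?_⟩
  ext j l
  rw [toep_apply]
  have h : ∃ p : Fin n × Fin n, ((p.1 : ℕ) : ℤ) - ((p.2 : ℕ) : ℤ)
    = ((j : ℕ) : ℤ) - ((l : ℕ) : ℤ) := ⟨(j, l), rfl⟩
  rw [dif_pos h]
  exact T.2 _ _ _ _ h.choose_spec.symm

lemma toep_congr {n : ℕ} {c d : ℤ → ℂ} (h : ∀ k ∈ Finset.Ioo (-(n : ℤ)) n, c k = d k) :
    toep n c = toep n d := by
  ext j l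
  rw [toep_apply, toep_apply]
  apply h
  rw [Finset.mem_Ioo]
  have := j.2
  have := l.2
  omega

lemma deltaMat_toep (n : ℕ) (c : ℤ → ℂ) :
    deltaMat n (toep n c : Matrix (Fin n) (Fin n) ℂ) = toep n (fun k => (k : ℂ) * c k) := by
  ext j l; rfl

noncomputable def tau (n : ℕ) (k : ℤ) : toeplitzSubmodule n := toep n (Pi.single k 1)

lemma toep_eq_sum (n : ℕ) (c : ℤ → ℂ) :
    toep n c = ∑ k ∈ Finset.Ioo (-(n : ℤ)) n, c k • tau n k := by
  simp only [tau, ← map_smul, ← map_sum]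
  apply toep_congr
  intro k hk
  simp only [Finset.sum_apply, Pi.smul_apply, Pi.single_apply, smul_eq_mul, mul_ite, mul_one,
    mul_zero, Finset.sum_ite_eq, if_pos hk]

lemma toep_single_zero (n : ℕ) : tau n 0 = toeplitzOne n := by
  ext j l
  simp only [tau, toep_apply, toeplitzOne, Pi.single_apply, Matrix.one_apply]
  congr 1
  rw [Fin.ext_iff]
  apply propext; omega

lemma functional_toep {n : ℕ} (φ : toeplitzSubmodule n →ₗ[ℂ] ℂ) (c : ℤ → ℂ) :
    φ (toep n c) = ∑ k ∈ Finset.Ioo (-(n : ℤ)) n, c k * φ (tau n k) := by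
  rw [toep_eq_sum, map_sum]; simp

lemma symbol_le {n : ℕ} (c : ℤ → ℂ) {k : ℤ} (hk : k ∈ Finset.Ioo (-(n : ℤ)) n) :
    ‖c k‖ ≤ l2OpNorm (toep n c : Matrix (Fin n) (Fin n) ℂ) := by
  rw [Finset.mem_Ioo] at hk
  rcases le_total 0 k with h0 | h0
  · have := entry_norm_le (toep n c : Matrix (Fin n) (Fin n) ℂ) ⟨k.toNat, by omega⟩ ⟨0, by omega⟩
    rw [toep_apply] at this
    simpa [h0] using this
  · have := entry_norm_le (toep n c : Matrix (Fin n) (Fin n) ℂ) ⟨0, by omega⟩ ⟨(-k).toNat, by omega⟩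
    rw [toep_apply] at this
    simpa [h0] using this

lemma toep_card (n : ℕ) (k : ℤ) (hk : k ∈ Finset.Ioo (-(n : ℤ)) n) :
    ((Finset.univ.filter fun p : Fin n × Fin n =>
      ((p.1 : ℕ) : ℤ) - ((p.2 : ℕ) : ℤ) = k).card : ℤ) = n - |k| := by
  rw [Finset.mem_Ioo] at hk
  have : (Finset.univ.filter fun p : Fin n × Fin n =>
      ((p.1 : ℕ) : ℤ) - ((p.2 : ℕ) : ℤ) = k).card = (Finset.range (n - k.natAbs)).card := by
    symm
    refine Finset.card_bij (fun a ha => (⟨a + k.toNat, ?_⟩, ⟨a + (-k).toNat, ?_⟩)) ?_ ?_ ?_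
    · rw [Finset.mem_range] at ha; omega
    · rw [Finset.mem_range] at ha; omega
    · intro a ha
      simp only [Finset.mem_filter, Finset.mem_univ, true_and]
      push_cast; omega
    · intro a ha b hb h
      simp only [Prod.mk.injEq, Fin.mk.injEq] at h
      omega
    · rintro ⟨⟨a, ha⟩, ⟨b, hb⟩⟩ h
      simp only [Finset.mem_filter, Finset.mem_univ, true_and] at h
      refine ⟨min a b, ?_, ?_⟩
      · rw [Finset.mem_range]; omega
      · simp only [Prod.mk.injEq, Fin.mk.injEq]; omega
  rw [this, Finset.card_range, Int.abs_eq_natAbs]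
  omega

lemma toep_double_sum (n : ℕ) (g : ℤ → ℂ) :
    ∑ j : Fin n, ∑ l : Fin n, g (((j : ℕ) : ℤ) - ((l : ℕ) : ℤ))
      = ∑ k ∈ Finset.Ioo (-(n : ℤ)) n, ((n : ℂ) - |(k : ℝ)|) * g k := by
  rw [← Fintype.sum_prod_type (f := fun p : Fin n × Fin n =>
    g (((p.1 : ℕ) : ℤ) - ((p.2 : ℕ) : ℤ)))]
  rw [← Finset.sum_fiberwise_of_maps_to (t := Finset.Ioo (-(n : ℤ)) n)
    (g := fun p : Fin n × Fin n => ((p.1 : ℕ) : ℤ) - ((p.2 : ℕ) : ℤ))]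
  · refine Finset.sum_congr rfl fun k hk => ?_
    rw [Finset.sum_congr rfl (g := fun _ => g k)]
    · rw [Finset.sum_const, nsmul_eq_mul]
      congr 1
      have := toep_card n k hk
      have h2 : (((Finset.univ.filter fun p : Fin n × Fin n =>
        ((p.1 : ℕ) : ℤ) - ((p.2 : ℕ) : ℤ) = k).card : ℤ) : ℂ) = ((n - |k| : ℤ) : ℂ) := by rw [this]
      rw [← Int.cast_abs, Complex.ofReal_intCast]
      push_cast at h2 ⊢
      exact h2
    · intro p hp
      rw [Finset.mem_filter] at hp
      rw [hp.2]
  · rintro ⟨a, b⟩ _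
    rw [Finset.mem_Ioo]
    have := a.2
    have := b.2
    dsimp only
    omega

lemma star_mem_toeplitz {n : ℕ} (T : toeplitzSubmodule n) :
    (T : Matrix (Fin n) (Fin n) ℂ).conjTranspose ∈ toeplitzSubmodule n := by
  intro j l j' l' h
  simp only [Matrix.conjTranspose_apply]
  rw [T.2 l j l' j' (by omega)]

lemma state_herm {n : ℕ} (φ : ToeplitzState n) (H : toeplitzSubmodule n)
    (hH : (H : Matrix (Fin n) (Fin n) ℂ).IsHermitian) :
    (φ.1 H).re ≤ l2OpNorm (H : Matrix (Fin n) (Fin n) ℂ) ∧ (φ.1 H).im = 0 := by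
  have h := φ.2.2 ((l2OpNorm (H : Matrix (Fin n) (Fin n) ℂ) : ℂ) • toeplitzOne n - H)
    (posSemidef_norm_sub _ hH)
  rw [map_sub, map_smul, φ.2.1, Complex.le_def] at h
  simp at h
  exact ⟨h.1, h.2.symm ▸ rfl⟩

lemma state_re_le {n : ℕ} (φ : ToeplitzState n) (T : toeplitzSubmodule n) :
    (φ.1 T).re ≤ l2OpNorm (T : Matrix (Fin n) (Fin n) ℂ) := by
  set S : toeplitzSubmodule n := ⟨_, star_mem_toeplitz T⟩ with hS
  have e : T = (1 / 2 : ℂ) • (T + S) + Complex.I • ((-Complex.I / 2) • (T - S)) := by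
    rw [smul_smul]
    have : Complex.I * (-Complex.I / 2) = 1 / 2 := by
      have := Complex.I_mul_I
      linear_combination (-1 / 2) * this
    rw [this, ← smul_add]
    module
  have h1 := state_herm φ ((1 / 2 : ℂ) • (T + S)) (by
    rw [Matrix.IsHermitian]
    simp [hS, add_comm])
  have h2 := state_herm φ ((-Complex.I / 2) • (T - S)) (by
    rw [Matrix.IsHermitian]
    simp only [hS, Submodule.coe_smul, Submodule.coe_sub, Matrix.conjTranspose_smul,
      Matrix.conjTranspose_sub, Matrix.conjTranspose_conjTranspose]
    have : star (-Complex.I / 2) = -(-Complex.I / 2) := by simp [neg_div]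
    rw [this]
    module)
  have h3 : (φ.1 T).re = (φ.1 ((1 / 2 : ℂ) • (T + S))).re := by
    conv_lhs => rw [e]
    rw [map_add, map_smul φ.1 Complex.I, Complex.add_re, smul_eq_mul, Complex.I_mul_re, h2.2]
    simp only [neg_zero, add_zero]
  rw [h3]
  refine h1.1.trans ?_
  have h4 : l2OpNorm (((1 / 2 : ℂ) • (T + S) : toeplitzSubmodule n) : Matrix (Fin n) (Fin n) ℂ)
      = 1 / 2 * l2OpNorm ((T : Matrix (Fin n) (Fin n) ℂ) + (T : Matrix (Fin n) (Fin n) ℂ).conjTranspose) := by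
    rw [Submodule.coe_smul, l2OpNorm_smul]
    simp [hS]
  rw [h4]
  have h5 := l2OpNorm_add_le (T : Matrix (Fin n) (Fin n) ℂ) (T : Matrix (Fin n) (Fin n) ℂ).conjTranspose
  rw [l2OpNorm_conjTranspose] at h5
  linarith

lemma exists_phase (z : ℂ) : ∃ c : ℂ, ‖c‖ = 1 ∧ c * z = ‖z‖ := by
  rcases eq_or_ne z 0 with rfl | hz
  · exact ⟨1, by simp⟩
  · have : (‖z‖ : ℂ) ≠ 0 := by simpa using hz
    refine ⟨(starRingEnd ℂ) z / ‖z‖, ?_, ?_⟩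
    · rw [norm_div, RCLike.norm_conj]; simp [hz]
    · rw [div_mul_eq_mul_div, ← Complex.normSq_eq_conj_mul_self, Complex.normSq_eq_norm_sq]
      push_cast
      field_simp

lemma state_norm_le {n : ℕ} (φ : ToeplitzState n) (T : toeplitzSubmodule n) :
    ‖φ.1 T‖ ≤ l2OpNorm (T : Matrix (Fin n) (Fin n) ℂ) := by
  obtain ⟨c, hc, h⟩ := exists_phase (φ.1 T)
  have h1 := state_re_le φ (c • T)
  rw [map_smul, smul_eq_mul, h, Submodule.coe_smul, l2OpNorm_smul, hc] at h1
  simpa using h1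
section ToeplitzMetric

lemma state_sub_le_sum {n : ℕ} (φ ψ : ToeplitzState n) (T : toeplitzSubmodule n)
    (hT : l2OpNorm (deltaMat n (T : Matrix (Fin n) (Fin n) ℂ)) ≤ 1) :
    ‖φ.1 T - ψ.1 T‖ ≤ ∑ k ∈ Finset.Ioo (-(n : ℤ)) n, ‖φ.1 (tau n k) - ψ.1 (tau n k)‖ := by
  obtain ⟨c, rfl⟩ := toep_surj n T
  rw [functional_toep, functional_toep, ← Finset.sum_sub_distrib]
  refine (norm_sum_le _ _).trans (Finset.sum_le_sum fun k hk => ?_)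
  rw [← mul_sub, norm_mul]
  rcases eq_or_ne k 0 with rfl | h0
  · rw [toep_single_zero, φ.2.1, ψ.2.1]; simp
  · rw [deltaMat_toep] at hT
    have h1 := (symbol_le (fun k => (k : ℂ) * c k) hk).trans hT
    rw [norm_mul, Complex.norm_intCast] at h1
    have h2 : (1 : ℝ) ≤ |(k : ℝ)| := by
      rw [← Int.cast_abs]; exact_mod_cast Int.one_le_abs h0
    have h3 : ‖c k‖ ≤ 1 := by nlinarith [norm_nonneg (c k)]
    exact mul_le_of_le_one_left (norm_nonneg _) h3

lemma tdist_bdd {n : ℕ} (φ ψ : ToeplitzState n) : BddAbove {r : ℝ | ∃ T : toeplitzSubmodule n,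
    l2OpNorm (deltaMat n (T : Matrix (Fin n) (Fin n) ℂ)) ≤ 1 ∧ r = ‖φ.1 T - ψ.1 T‖} := by
  refine ⟨∑ k ∈ Finset.Ioo (-(n : ℤ)) n, ‖φ.1 (tau n k) - ψ.1 (tau n k)‖, ?_⟩
  rintro r ⟨T, hT, rfl⟩
  exact state_sub_le_sum φ ψ T hT

lemma le_tdist {n : ℕ} (φ ψ : ToeplitzState n) (T : toeplitzSubmodule n)
    (hT : l2OpNorm (deltaMat n (T : Matrix (Fin n) (Fin n) ℂ)) ≤ 1) :
    ‖φ.1 T - ψ.1 T‖ ≤ toeplitzStateDist n φ ψ :=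
  le_csSup (tdist_bdd φ ψ) ⟨T, hT, rfl⟩

lemma deltaMat_smul {n : ℕ} (c : ℂ) (T : Matrix (Fin n) (Fin n) ℂ) :
    deltaMat n (c • T) = c • deltaMat n T := by
  ext j l; simp [deltaMat]; ring

lemma tdist_le {n : ℕ} (φ ψ : ToeplitzState n) (C : ℝ)
    (h : ∀ T : toeplitzSubmodule n, l2OpNorm (deltaMat n (T : Matrix (Fin n) (Fin n) ℂ)) ≤ 1 →
      ‖φ.1 T - ψ.1 T‖ ≤ C) : toeplitzStateDist n φ ψ ≤ C := by
  refine csSup_le ⟨0, 0, ?_, by simp⟩ ?_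
  · have : deltaMat n ((0 : toeplitzSubmodule n) : Matrix (Fin n) (Fin n) ℂ) = 0 := by
      ext j l; simp [deltaMat]
    rw [this]; simp [l2OpNorm]
  · rintro r ⟨T, hT, rfl⟩
    exact h T hT

lemma tdist_le_sum {n : ℕ} (φ ψ : ToeplitzState n) : toeplitzStateDist n φ ψ
    ≤ ∑ k ∈ Finset.Ioo (-(n : ℤ)) n, ‖φ.1 (tau n k) - ψ.1 (tau n k)‖ :=
  tdist_le _ _ _ fun T hT => state_sub_le_sum φ ψ T hT

lemma tdist_nonneg {n : ℕ} (φ ψ : ToeplitzState n) : 0 ≤ toeplitzStateDist n φ ψ := by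
  refine (norm_nonneg _).trans (le_tdist φ ψ 0 ?_)
  have : deltaMat n ((0 : toeplitzSubmodule n) : Matrix (Fin n) (Fin n) ℂ) = 0 := by
    ext j l; simp [deltaMat]
  rw [this]; simp [l2OpNorm]

/-- The metric space structure on the state space. -/
@[reducible] noncomputable def toeplitzMetric (n : ℕ) : MetricSpace (ToeplitzState n) where
  dist := toeplitzStateDist n
  dist_self φ := le_antisymm (tdist_le _ _ _ (by simp)) (tdist_nonneg _ _)
  dist_comm φ ψ := by
    simp only [toeplitzStateDist]
    simp_rw [norm_sub_rev]
  dist_triangle φ ψ χ := by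
    refine tdist_le _ _ _ fun T hT => ?_
    calc ‖φ.1 T - χ.1 T‖ ≤ ‖φ.1 T - ψ.1 T‖ + ‖ψ.1 T - χ.1 T‖ := norm_sub_le_norm_sub_add_norm_sub _ _ _
      _ ≤ _ := add_le_add (le_tdist _ _ _ hT) (le_tdist _ _ _ hT)
  eq_of_dist_eq_zero := by
    intro φ ψ h
    apply Subtype.ext
    ext T
    set r : ℝ := l2OpNorm (deltaMat n (T : Matrix (Fin n) (Fin n) ℂ)) + 1 with hr
    have hr0 : 0 < r := by have := l2OpNorm_nonneg (deltaMat n (T : Matrix (Fin n) (Fin n) ℂ)); linarith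
    have h1 := le_tdist φ ψ (((r⁻¹ : ℝ) : ℂ) • T) (by
      rw [Submodule.coe_smul, deltaMat_smul, l2OpNorm_smul, Complex.norm_real, Real.norm_eq_abs,
        abs_of_pos (inv_pos.2 hr0), inv_mul_le_iff₀ hr0]
      linarith)
    rw [show toeplitzStateDist n φ ψ = 0 from h, map_smul, map_smul, ← smul_sub, norm_smul] at h1
    have h2 : ‖((r⁻¹ : ℝ) : ℂ)‖ ≠ 0 := by simp [hr0.ne']
    have h3 := le_antisymm h1 (by positivity)
    rcases mul_eq_zero.1 h3 with h4 | h4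
    · exact absurd h4 h2
    · exact sub_eq_zero.1 (norm_eq_zero.1 h4)

lemma toeplitz_compact (n : ℕ) :
    @CompactSpace (ToeplitzState n) (toeplitzMetric n).toUniformSpace.toTopologicalSpace := by
  let _ := toeplitzMetric n
  let K : Set (toeplitzSubmodule n → ℂ) := {f | (∀ S T, f (S + T) = f S + f T) ∧
    (∀ (c : ℂ) T, f (c • T) = c * f T) ∧ f (toeplitzOne n) = 1 ∧
    ∀ T : toeplitzSubmodule n, (T : Matrix (Fin n) (Fin n) ℂ).PosSemidef → 0 ≤ f T}
  let g : K → ToeplitzState n := fun f => ⟨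
    { toFun := f.1, map_add' := f.2.1, map_smul' := f.2.2.1 }, f.2.2.2.1, f.2.2.2.2⟩
  have hg : Function.Surjective g := fun φ =>
    ⟨⟨φ.1, map_add φ.1, map_smul φ.1, φ.2.1, φ.2.2⟩, rfl⟩
  have hKc : IsClosed K := by
    have hKe : K = (⋂ S, ⋂ T, {f | f (S + T) = f S + f T}) ∩
        ((⋂ c : ℂ, ⋂ T, {f | f (c • T) = c * f T}) ∩ ({f | f (toeplitzOne n) = 1} ∩
        (⋂ T : toeplitzSubmodule n, ⋂ _ : (T : Matrix (Fin n) (Fin n) ℂ).PosSemidef,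
          {f | 0 ≤ f T}))) := by
      ext f; simp [K]
    rw [hKe]
    refine IsClosed.inter ?_ (IsClosed.inter ?_ (IsClosed.inter ?_ ?_))
    · exact isClosed_iInter fun S => isClosed_iInter fun T =>
        isClosed_eq (by fun_prop) (by fun_prop)
    · exact isClosed_iInter fun S => isClosed_iInter fun T =>
        isClosed_eq (by fun_prop) (by fun_prop)
    · exact isClosed_eq (by fun_prop) (by fun_prop)
    · exact isClosed_iInter fun S => isClosed_iInter fun T =>
        isClosed_le (by fun_prop) (by fun_prop)
  have hK : IsCompact K := by
    refine IsCompact.of_isClosed_subset (isCompact_univ_pi (s := fun T : toeplitzSubmodule n =>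
      Metric.closedBall (0 : ℂ) (l2OpNorm (T : Matrix (Fin n) (Fin n) ℂ)))
      fun T => isCompact_closedBall _ _) hKc ?_
    intro f hf T _
    rw [mem_closedBall_zero_iff]
    exact state_norm_le (g ⟨f, hf⟩) T
  have : CompactSpace K := isCompact_iff_compactSpace.1 hK
  refine hg.compactSpace (f := g) ?_
  rw [continuous_iff_continuousAt]
  intro f₀
  rw [ContinuousAt, tendsto_iff_dist_tendsto_zero]
  refine squeeze_zero (fun _ => dist_nonneg) (fun f => tdist_le_sum (g f) (g f₀)) ?_
  have : Continuous fun f : K => ∑ k ∈ Finset.Ioo (-(n : ℤ)) n,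
      ‖f.1 (tau n k) - f₀.1 (tau n k)‖ := by
    refine continuous_finsetSum _ fun k _ => ?_
    exact (((continuous_apply (tau n k)).comp continuous_subtype_val).sub continuous_const).norm
  have h2 := this.tendsto f₀
  simp only [sub_self, norm_zero, Finset.sum_const_zero] at h2
  exact h2

end ToeplitzMetric

section Kantorovich

abbrev Circ : Type := AddCircle (2 * Real.pi)

lemma cont_integrable {E : Type*} [NormedAddCommGroup E] {f : Circ → E}
    (hf : Continuous f) (μ : Measure Circ) [IsFiniteMeasure μ] : Integrable f μ :=
  hf.integrable_of_hasCompactSupport (HasCompactSupport.of_compactSpace f)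

lemma circ_norm_le (x : Circ) : ‖x‖ ≤ Real.pi := by
  have := AddCircle.norm_le_half_period (2 * Real.pi) (x := x) (by positivity)
  rwa [abs_of_pos (by positivity), mul_div_cancel_left₀ _ (by norm_num)] at this

lemma kdist_bdd (μ ν : ProbabilityMeasure Circ) :
    BddAbove {r : ℝ | ∃ f : AddCircle (2 * Real.pi) → ℝ, LipschitzWith 1 f ∧
    r = |(∫ x, f x ∂(μ : Measure (AddCircle (2 * Real.pi))))
        - ∫ x, f x ∂(ν : Measure (AddCircle (2 * Real.pi)))|} := by
  refine ⟨Real.pi + Real.pi, ?_⟩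
  rintro r ⟨f, hf, rfl⟩
  have key : ∀ μ : ProbabilityMeasure Circ, |∫ x, f x ∂(μ : Measure Circ) - f 0| ≤ Real.pi := by
    intro μ
    have h1 : ∫ x, f x ∂(μ : Measure Circ) - f 0 = ∫ x, (f x - f 0) ∂(μ : Measure Circ) := by
      rw [integral_sub (cont_integrable hf.continuous _) (integrable_const _)]
      simp
    rw [h1]
    have := norm_integral_le_of_norm_le_const (μ := (μ : Measure Circ)) (f := fun x => f x - f 0)
      (C := Real.pi) (ae_of_all _ fun x => by
        rw [Real.norm_eq_abs, ← Real.dist_eq]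
        refine (hf.dist_le_mul x 0).trans ?_
        rw [dist_zero_right]; simpa using circ_norm_le x)
    simpa using this
  have h1 := key μ
  have h2 := key ν
  rw [abs_le] at *
  constructor <;> linarith [h1.1, h1.2, h2.1, h2.2]

lemma le_kdist (μ ν : ProbabilityMeasure Circ) (f : Circ → ℝ) (hf : LipschitzWith 1 f) :
    |(∫ x, f x ∂(μ : Measure Circ)) - ∫ x, f x ∂(ν : Measure Circ)| ≤ kantorovichDist μ ν :=
  le_csSup (kdist_bdd μ ν) ⟨f, hf, rfl⟩

lemma kdist_le (μ ν : ProbabilityMeasure Circ) (C : ℝ) (h : ∀ f : Circ → ℝ, LipschitzWith 1 f →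
    |(∫ x, f x ∂(μ : Measure Circ)) - ∫ x, f x ∂(ν : Measure Circ)| ≤ C) :
    kantorovichDist μ ν ≤ C := by
  refine csSup_le ⟨0, fun _ => 0, ?_, by simp⟩ ?_
  · exact LipschitzWith.const' 0
  · rintro r ⟨f, hf, rfl⟩
    exact h f hf

lemma kdist_nonneg (μ ν : ProbabilityMeasure Circ) : 0 ≤ kantorovichDist μ ν :=
  (abs_nonneg _).trans (le_kdist μ ν (fun _ => 0) (LipschitzWith.const' 0))

/-- The Kantorovich metric. -/
@[reducible] noncomputable def kantMetric : MetricSpace (ProbabilityMeasure Circ) where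
  dist := kantorovichDist
  dist_self φ := le_antisymm (kdist_le _ _ _ (by simp)) (kdist_nonneg _ _)
  dist_comm φ ψ := by
    simp only [kantorovichDist]
    simp_rw [abs_sub_comm]
  dist_triangle φ ψ χ := by
    refine kdist_le _ _ _ fun f hf => ?_
    exact (abs_sub_le _ _ _).trans (add_le_add (le_kdist _ _ _ hf) (le_kdist _ _ _ hf))
  eq_of_dist_eq_zero := by
    intro μ ν h
    have h1 : Tendsto (fun _ : ℕ => μ) atTop (nhds ν) := by
      rw [tendsto_iff_forall_lipschitz_integral_tendsto]
      rintro f - ⟨L, hL⟩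
      suffices hh : ∫ x, f x ∂(μ : Measure Circ) = ∫ x, f x ∂(ν : Measure Circ) by
        rw [hh]; exact tendsto_const_nhds
      set r : NNReal := L + 1 with hr
      have hr0 : 0 < r := by positivity
      have h2 := le_kdist μ ν (fun x => ((r⁻¹ : NNReal) : ℝ) * f x) (by
        apply LipschitzWith.of_dist_le_mul
        intro x y
        have h3 := hL.dist_le_mul x y
        rw [Real.dist_eq] at *
        rw [← mul_sub, abs_mul, abs_of_nonneg (NNReal.coe_nonneg _), NNReal.coe_inv,
          inv_mul_le_iff₀ (by exact_mod_cast hr0)]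
        refine h3.trans ?_
        rw [NNReal.coe_one, one_mul, hr]
        gcongr
        simp)
      rw [integral_const_mul, integral_const_mul, ← mul_sub, abs_mul,
        show kantorovichDist μ ν = 0 from h] at h2
      have h3 := le_antisymm h2 (by positivity)
      rcases mul_eq_zero.1 h3 with h4 | h4
      · simp [hr0.ne'] at h4
      · exact sub_eq_zero.1 (abs_eq_zero.1 h4)
    exact tendsto_nhds_unique tendsto_const_nhds h1

end Kantorovich
section MapA

/-- The Fejér-type symbol map `𝒯_n → C(S¹)`. -/
noncomputable def sig (n : ℕ) (T : toeplitzSubmodule n) (x : Circ) : ℂ :=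
  (1 / n : ℂ) * ∑ j : Fin n, ∑ l : Fin n,
    (T : Matrix (Fin n) (Fin n) ℂ) j l * fourier (((j : ℕ) : ℤ) - ((l : ℕ) : ℤ)) x

lemma sig_continuous (n : ℕ) (T : toeplitzSubmodule n) : Continuous (sig n T) := by
  unfold sig; fun_prop

lemma sig_add (n : ℕ) (S T : toeplitzSubmodule n) (x : Circ) :
    sig n (S + T) x = sig n S x + sig n T x := by
  simp only [sig, Submodule.coe_add, Matrix.add_apply, add_mul, Finset.sum_add_distrib, mul_add]

lemma sig_smul (n : ℕ) (c : ℂ) (T : toeplitzSubmodule n) (x : Circ) :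
    sig n (c • T) x = c * sig n T x := by
  simp only [sig, Submodule.coe_smul, Matrix.smul_apply, smul_eq_mul, mul_assoc, ← Finset.mul_sum]
  ring

lemma sig_toep (n : ℕ) (c : ℤ → ℂ) (x : Circ) : sig n (toep n c) x
    = ∑ k ∈ Finset.Ioo (-(n : ℤ)) n, (1 / n : ℂ) * (((n : ℂ) - |(k : ℝ)|) * (c k * fourier k x)) := by
  simp only [sig, toep_apply]
  rw [toep_double_sum n (fun k => c k * fourier k x), Finset.mul_sum]

lemma fourier_norm_one (k : ℤ) (x : Circ) : ‖fourier k x‖ = 1 := by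
  rw [fourier_apply]; exact Circle.norm_coe _

lemma sig_form (n : ℕ) (T : toeplitzSubmodule n) (x : Circ) :
    sig n T x = (1 / n : ℂ) * ∑ j : Fin n, star (fourier (-((j : ℕ) : ℤ)) x) *
      ((T : Matrix (Fin n) (Fin n) ℂ).mulVec (fun l : Fin n => fourier (-((l : ℕ) : ℤ)) x)) j := by
  unfold sig
  congr 1
  refine Finset.sum_congr rfl fun j _ => ?_
  rw [Matrix.mulVec, dotProduct, Finset.mul_sum]
  refine Finset.sum_congr rfl fun l _ => ?_
  rw [sub_eq_add_neg, fourier_add]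
  have : star (fourier (-((j : ℕ) : ℤ)) x) = fourier ((j : ℕ) : ℤ) x := by
    rw [fourier_neg]; simp
  rw [this]; ring

lemma sig_norm_le (n : ℕ) (T : toeplitzSubmodule n) (x : Circ) :
    ‖sig n T x‖ ≤ l2OpNorm (T : Matrix (Fin n) (Fin n) ℂ) := by
  rw [sig_form, norm_mul]
  have h := re_form_le (T : Matrix (Fin n) (Fin n) ℂ) (fun l : Fin n => fourier (-((l : ℕ) : ℤ)) x)
  simp only [fourier_norm_one, one_pow, Finset.sum_const, Finset.card_univ, Fintype.card_fin,
    nsmul_eq_mul, mul_one] at h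
  have h0 := l2OpNorm_nonneg (T : Matrix (Fin n) (Fin n) ℂ)
  rcases Nat.eq_zero_or_pos n with rfl | hn
  · simpa using h0
  · have : (0 : ℝ) < n := by exact_mod_cast hn
    rw [norm_div, norm_one, Complex.norm_natCast, one_div, inv_mul_le_iff₀ this, mul_comm (n : ℝ)]
    exact h

lemma sig_nonneg (n : ℕ) (T : toeplitzSubmodule n)
    (hT : (T : Matrix (Fin n) (Fin n) ℂ).PosSemidef) (x : Circ) : 0 ≤ sig n T x := by
  rw [sig_form]
  refine mul_nonneg ?_ ?_
  · have : (1 / n : ℂ) = ((1 / n : ℝ) : ℂ) := by push_cast; rfl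
    rw [this, Complex.zero_le_real]; positivity
  · exact hT.dotProduct_mulVec_nonneg (fun l : Fin n => fourier (-((l : ℕ) : ℤ)) x)

lemma sig_one (n : ℕ) (hn : 0 < n) (x : Circ) : sig n (toeplitzOne n) x = 1 := by
  rw [← toep_single_zero, tau, sig_toep, Finset.sum_eq_single 0]
  · have : (n : ℂ) ≠ 0 := by exact_mod_cast hn.ne'
    simp [this]
  · intro k _ hk; simp [hk]
  · intro h; exfalso; apply h; rw [Finset.mem_Ioo]; omega

lemma sig_hasDerivAt (n : ℕ) (T : toeplitzSubmodule n) (c : ℤ → ℂ) (hc : T = toep n c) (x : ℝ) :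
    HasDerivAt (fun y : ℝ => sig n T (y : Circ))
      (Complex.I * sig n (toep n fun k => (k : ℂ) * c k) (x : Circ)) x := by
  subst hc
  simp only [sig_toep]
  rw [Finset.mul_sum]
  refine HasDerivAt.fun_sum fun k _ => ?_
  have h := hasDerivAt_fourier (2 * Real.pi) k x
  have hpi : (Real.pi : ℂ) ≠ 0 := by exact_mod_cast Real.pi_ne_zero
  have e : 2 * (Real.pi : ℂ) * Complex.I * k / ((2 * Real.pi : ℝ) : ℂ) = Complex.I * k := by
    push_cast
    field_simp
  rw [e] at h
  refine ((((h.const_mul (c k)).const_mul ((n : ℂ) - |(k : ℝ)|)).const_mul (1 / n : ℂ))).congr_deriv ?_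
  ring

lemma circ_lift (x : Circ) : ∃ t : ℝ, (t : Circ) = x ∧ |t| = ‖x‖ := by
  induction x using QuotientAddGroup.induction_on with
  | H z =>
    refine ⟨z - round ((2 * Real.pi)⁻¹ * z) * (2 * Real.pi), ?_, ?_⟩
    · rw [AddCircle.coe_sub]
      have : ((round ((2 * Real.pi)⁻¹ * z) * (2 * Real.pi) : ℝ) : Circ) = 0 := by
        rw [AddCircle.coe_eq_zero_iff]
        exact ⟨round ((2 * Real.pi)⁻¹ * z), by simp⟩
      rw [this, sub_zero]
    · exact (AddCircle.norm_eq (2 * Real.pi) (x := z)).symm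

lemma sig_lipschitz (n : ℕ) (T : toeplitzSubmodule n)
    (hT : l2OpNorm (deltaMat n (T : Matrix (Fin n) (Fin n) ℂ)) ≤ 1) (x y : Circ) :
    ‖sig n T x - sig n T y‖ ≤ dist x y := by
  obtain ⟨c, hc⟩ := toep_surj n T
  obtain ⟨s, hs, hs'⟩ := circ_lift (x - y)
  obtain ⟨t, ht, -⟩ := circ_lift y
  have hx : x = ((t + s : ℝ) : Circ) := by rw [AddCircle.coe_add, hs, ht]; abel
  have h := Convex.norm_image_sub_le_of_norm_hasDerivWithin_le (s := Set.univ)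
    (f := fun y : ℝ => sig n T (y : Circ)) (C := 1) (x := t) (y := t + s)
    (fun u _ => (sig_hasDerivAt n T c hc u).hasDerivWithinAt) (fun u _ => by
      rw [norm_mul, Complex.norm_I, one_mul]
      refine (sig_norm_le _ _ _).trans ?_
      rw [← deltaMat_toep, ← hc]; exact hT) convex_univ (Set.mem_univ _) (Set.mem_univ _)
  rw [dist_eq_norm, ← hs', hx, ← ht]
  simpa using h

/-- The pushforward of probability measures to Toeplitz states. -/
noncomputable def mapA (n : ℕ) (hn : 0 < n) (μ : ProbabilityMeasure Circ) : ToeplitzState n :=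
  ⟨{ toFun := fun T => ∫ x, sig n T x ∂(μ : Measure Circ)
     map_add' := fun S T => by
      simp only [sig_add]
      exact integral_add (cont_integrable (sig_continuous n S) _)
        (cont_integrable (sig_continuous n T) _)
     map_smul' := fun c T => by
      simp only [sig_smul]
      exact integral_const_mul _ _ }, by
    constructor
    · simp [sig_one n hn]
    · intro T hT
      have h : ∀ x, sig n T x = (((sig n T x).re : ℝ) : ℂ) := fun x => by
        have := (Complex.le_def.1 (sig_nonneg n T hT x)).2
        apply Complex.ext
        · simp
        · simpa using this.symm
      have h2 : ∫ x, sig n T x ∂(μ : Measure Circ)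
          = ((∫ x, (sig n T x).re ∂(μ : Measure Circ) : ℝ) : ℂ) := by
        rw [← integral_complex_ofReal]; exact integral_congr_ae (ae_of_all _ h)
      change 0 ≤ ∫ x, sig n T x ∂(μ : Measure Circ)
      rw [h2, Complex.zero_le_real]
      exact integral_nonneg fun x => (Complex.le_def.1 (sig_nonneg n T hT x)).1⟩

lemma mapA_apply (n : ℕ) (hn : 0 < n) (μ : ProbabilityMeasure Circ) (T : toeplitzSubmodule n) :
    (mapA n hn μ).1 T = ∫ x, sig n T x ∂(μ : Measure Circ) := rfl

lemma mapA_contract (n : ℕ) (hn : 0 < n) (μ ν : ProbabilityMeasure Circ) :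
    toeplitzStateDist n (mapA n hn μ) (mapA n hn ν) ≤ kantorovichDist μ ν := by
  refine tdist_le _ _ _ fun T hT => ?_
  obtain ⟨c, hc, h⟩ := exists_phase ((mapA n hn μ).1 T - (mapA n hn ν).1 T)
  have hi : ∀ μ : ProbabilityMeasure Circ, ∫ x, (c * sig n T x).re ∂(μ : Measure Circ)
      = (c * (mapA n hn μ).1 T).re := by
    intro μ
    rw [mapA_apply, ← integral_const_mul]
    exact integral_re (𝕜 := ℂ) (cont_integrable (continuous_const.mul (sig_continuous n T)) _)
  have h1 := le_kdist μ ν (fun x => (c * sig n T x).re) (by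
    apply LipschitzWith.of_dist_le_mul
    intro x y
    rw [NNReal.coe_one, one_mul]
    refine le_trans ?_ (sig_lipschitz n T hT x y)
    rw [Real.dist_eq, ← Complex.sub_re, ← mul_sub]
    refine (Complex.abs_re_le_norm _).trans ?_
    rw [norm_mul, hc, one_mul])
  rw [hi, hi, ← Complex.sub_re, ← mul_sub, h, Complex.ofReal_re] at h1
  exact (le_abs_self _).trans h1

end MapA

section MapB

noncomputable abbrev haarC : Measure Circ := AddCircle.haarAddCircle

noncomputable def toepE (n : ℕ) (t : Circ) : toeplitzSubmodule n :=
  toep n fun k => fourier (-k) t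

lemma toepE_psd (n : ℕ) (t : Circ) : (toepE n t : Matrix (Fin n) (Fin n) ℂ).PosSemidef := by
  have := Matrix.posSemidef_vecMulVec_self_star (fun j : Fin n => fourier (-((j : ℕ) : ℤ)) t)
  convert this using 1
  ext j l
  rw [toepE, toep_apply, Matrix.vecMulVec_apply, neg_sub, sub_eq_add_neg, fourier_add, mul_comm]
  congr 1
  rw [Pi.star_apply, fourier_neg]
  simp

noncomputable def hden {n : ℕ} (φ : ToeplitzState n) (t : Circ) : ℝ := (φ.1 (toepE n t)).re

lemma hden_nonneg {n : ℕ} (φ : ToeplitzState n) (t : Circ) : 0 ≤ hden φ t :=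
  (Complex.le_def.1 (φ.2.2 _ (toepE_psd n t))).1

lemma hden_coe {n : ℕ} (φ : ToeplitzState n) (t : Circ) : (hden φ t : ℂ) =
    ∑ k ∈ Finset.Ioo (-(n : ℤ)) n, fourier (-k) t * φ.1 (tau n k) := by
  rw [← functional_toep]
  have := (Complex.le_def.1 (φ.2.2 _ (toepE_psd n t))).2
  apply Complex.ext
  · rfl
  · rw [Complex.ofReal_im]; exact this

lemma hden_continuous {n : ℕ} (φ : ToeplitzState n) : Continuous (hden φ) := by
  have : hden φ = fun t => (∑ k ∈ Finset.Ioo (-(n : ℤ)) n, fourier (-k) t * φ.1 (tau n k)).re := by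
    funext t; rw [← hden_coe]; simp
  rw [this]
  fun_prop

noncomputable def measB {n : ℕ} (φ : ToeplitzState n) : Measure Circ :=
  haarC.withDensity fun t => ENNReal.ofReal (hden φ t)

lemma integral_measB {n : ℕ} (φ : ToeplitzState n) (g : Circ → ℂ) (hg : Continuous g) :
    ∫ t, g t ∂(measB φ) = φ.1 (toep n (fourierCoeff g)) := by
  rw [measB, integral_withDensity_eq_integral_toReal_smul]
  · rw [functional_toep]
    have : ∀ t, (ENNReal.ofReal (hden φ t)).toReal • g t
        = ∑ k ∈ Finset.Ioo (-(n : ℤ)) n, (fourier (-k) t • g t) * φ.1 (tau n k) := by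
      intro t
      rw [ENNReal.toReal_ofReal (hden_nonneg φ t), Complex.real_smul, hden_coe, Finset.sum_mul]
      refine Finset.sum_congr rfl fun k _ => ?_
      simp only [smul_eq_mul]; ring
    simp only [this]
    rw [integral_finsetSum]
    · refine Finset.sum_congr rfl fun k _ => ?_
      rw [integral_mul_const]; rfl
    · intro k _
      apply cont_integrable
      fun_prop
  · exact (hden_continuous φ).measurable.ennreal_ofReal
  · exact ae_of_all _ fun t => ENNReal.ofReal_lt_top

lemma measB_prob {n : ℕ} (hn : 0 < n) (φ : ToeplitzState n) : IsProbabilityMeasure (measB φ) := by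
  constructor
  rw [measB, withDensity_apply _ MeasurableSet.univ, Measure.restrict_univ,
    ← ofReal_integral_eq_lintegral_ofReal (cont_integrable (hden_continuous φ) _)
      (ae_of_all _ (hden_nonneg φ))]
  have h1 : ((∫ t, hden φ t ∂haarC : ℝ) : ℂ) = 1 := by
    have h := integral_measB φ (fun _ => 1) continuous_const
    rw [measB, integral_withDensity_eq_integral_toReal_smul
      (hden_continuous φ).measurable.ennreal_ofReal (ae_of_all _ fun t => ENNReal.ofReal_lt_top)] at h
    simp only [ENNReal.toReal_ofReal (hden_nonneg φ _), Complex.real_smul, mul_one] at h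
    rw [integral_complex_ofReal] at h
    refine h.trans ?_
    have h2 : (fun _ : Circ => (1 : ℂ)) = fourier 0 := by ext t; simp
    rw [h2, fourierCoeff_fourier]
    exact (congrArg φ.1 (toep_single_zero n)).trans φ.2.1
  have h3 : ∫ t, hden φ t ∂haarC = 1 := by exact_mod_cast h1
  rw [h3]; simp

noncomputable def mapB (n : ℕ) (hn : 0 < n) (φ : ToeplitzState n) : ProbabilityMeasure Circ :=
  ⟨measB φ, measB_prob hn φ⟩

lemma mapB_integral (n : ℕ) (hn : 0 < n) (φ : ToeplitzState n) (g : Circ → ℂ) (hg : Continuous g) :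
    ∫ t, g t ∂(mapB n hn φ : Measure Circ) = φ.1 (toep n (fourierCoeff g)) :=
  integral_measB φ g hg

lemma mapB_integral_real (n : ℕ) (hn : 0 < n) (φ : ToeplitzState n) (f : Circ → ℝ)
    (hf : Continuous f) : ((∫ t, f t ∂(mapB n hn φ : Measure Circ) : ℝ) : ℂ)
      = φ.1 (toep n (fourierCoeff fun t => (f t : ℂ))) := by
  rw [← integral_complex_ofReal]
  exact mapB_integral n hn φ _ (by fun_prop)

end MapB
section Contraction

/-- The trigonometric polynomial of a vector. -/
noncomputable def trigPoly {n : ℕ} (y : Fin n → ℂ) (t : Circ) : ℂ :=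
  ∑ l : Fin n, y l * fourier ((l : ℕ) : ℤ) t

lemma trigPoly_continuous {n : ℕ} (y : Fin n → ℂ) : Continuous (trigPoly y) := by
  unfold trigPoly; fun_prop

lemma toep_form {n : ℕ} (g : Circ → ℂ) (hg : Continuous g) (x y : Fin n → ℂ) :
    ∑ j, star (y j) * ((toep n (fourierCoeff g) : Matrix (Fin n) (Fin n) ℂ).mulVec x) j
      = ∫ t, g t * (star (trigPoly y t) * trigPoly x t) ∂haarC := by
  have h : ∀ t, g t * (star (trigPoly y t) * trigPoly x t)
      = ∑ j, ∑ l, star (y j) * x l * (fourier (-(((j : Fin n) : ℕ) - ((l : Fin n) : ℕ) : ℤ)) t • g t) := by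
    intro t
    rw [trigPoly, trigPoly, star_sum, Finset.sum_mul_sum, Finset.mul_sum]
    refine Finset.sum_congr rfl fun j _ => ?_
    rw [Finset.mul_sum]
    refine Finset.sum_congr rfl fun l _ => ?_
    rw [neg_sub, sub_eq_add_neg, fourier_add, fourier_neg, star_mul', smul_eq_mul]
    simp only [starRingEnd_apply]
    ring
  simp only [h]
  have hi : ∀ j l : Fin n, Integrable (fun t => star (y j) * x l *
      (fourier (-(((j : Fin n) : ℕ) - ((l : Fin n) : ℕ) : ℤ)) t • g t)) haarC := by
    intro j l
    apply cont_integrable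
    fun_prop
  rw [integral_finsetSum _ fun j _ => integrable_finsetSum _ fun l _ => hi j l]
  refine Finset.sum_congr rfl fun j _ => ?_
  rw [integral_finsetSum _ fun l _ => hi j l, Matrix.mulVec, dotProduct, Finset.mul_sum]
  refine Finset.sum_congr rfl fun l _ => ?_
  rw [integral_const_mul, toep_apply, fourierCoeff]
  ring

lemma fourierCoeff_one : fourierCoeff (fun _ : Circ => (1 : ℂ)) = Pi.single 0 1 := by
  have h2 : (fun _ : Circ => (1 : ℂ)) = fourier 0 := by ext t; simp
  rw [h2, fourierCoeff_fourier]

lemma trigPoly_parseval {n : ℕ} (y : Fin n → ℂ) :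
    ∫ t, ‖trigPoly y t‖ ^ 2 ∂haarC = ∑ j, ‖y j‖ ^ 2 := by
  have h := toep_form (n := n) (fun _ => 1) continuous_const y y
  rw [fourierCoeff_one] at h
  have h1 : (toep n (Pi.single 0 1) : Matrix (Fin n) (Fin n) ℂ) = 1 :=
    congrArg Subtype.val (toep_single_zero n)
  have h2 : ∀ z : ℂ, star z * z = ((‖z‖ ^ 2 : ℝ) : ℂ) := fun z => by
    rw [← Complex.normSq_eq_norm_sq, Complex.normSq_eq_conj_mul_self]; rfl
  simp only [h1, Matrix.one_mulVec, one_mul, h2] at h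
  rw [integral_complex_ofReal] at h
  exact_mod_cast h.symm

lemma toep_norm_le (n : ℕ) (g : Circ → ℂ) (hg : Continuous g) (C : ℝ) (hC : 0 ≤ C)
    (h : ∀ t, ‖g t‖ ≤ C) : l2OpNorm (toep n (fourierCoeff g) : Matrix (Fin n) (Fin n) ℂ) ≤ C := by
  refine ContinuousLinearMap.opNorm_le_of_re_inner_le hC fun x y hx hy => ?_
  refine (RCLike.re_le_norm _).trans ?_
  rw [norm_inner_symm]
  have h1 : inner ℂ y (Matrix.toEuclideanCLM (𝕜 := ℂ)
      (toep n (fourierCoeff g) : Matrix (Fin n) (Fin n) ℂ) x) = ∑ j, star (y j) *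
      ((toep n (fourierCoeff g) : Matrix (Fin n) (Fin n) ℂ).mulVec x.ofLp) j := by
    rw [PiLp.inner_apply]
    refine Finset.sum_congr rfl fun j _ => ?_
    rw [RCLike.inner_apply, mul_comm]
    rfl
  rw [h1, toep_form g hg]
  have hx2 : ∑ j, ‖x.ofLp j‖ ^ 2 = 1 := by rw [← EuclideanSpace.norm_sq_eq, hx]; norm_num
  have hy2 : ∑ j, ‖y.ofLp j‖ ^ 2 = 1 := by rw [← EuclideanSpace.norm_sq_eq, hy]; norm_num
  have cx := trigPoly_continuous x.ofLp
  have cy := trigPoly_continuous y.ofLp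
  calc ‖∫ t, g t * (star (trigPoly y.ofLp t) * trigPoly x.ofLp t) ∂haarC‖
      ≤ ∫ t, C / 2 * (‖trigPoly y.ofLp t‖ ^ 2 + ‖trigPoly x.ofLp t‖ ^ 2) ∂haarC := by
        refine norm_integral_le_of_norm_le (cont_integrable (by fun_prop) _) (ae_of_all _ fun t => ?_)
        rw [norm_mul, norm_mul, norm_star]
        have := two_mul_le_add_sq ‖trigPoly y.ofLp t‖ ‖trigPoly x.ofLp t‖
        calc _ ≤ C * (‖trigPoly y.ofLp t‖ * ‖trigPoly x.ofLp t‖) := by gcongr; exact h t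
          _ ≤ _ := by nlinarith
    _ = C := by
        rw [integral_const_mul, integral_add (cont_integrable (by fun_prop) _)
          (cont_integrable (by fun_prop) _), trigPoly_parseval, trigPoly_parseval, hx2, hy2]
        ring

lemma fourier_add_arg (k : ℤ) (s t : Circ) : fourier k (s + t) = fourier k s * fourier k t := by
  simp only [fourier_apply, smul_add, AddCircle.toCircle_add, Circle.coe_mul]

lemma fourierCoeff_shift (f : Circ → ℂ) (h : Circ) (k : ℤ) :
    fourierCoeff (fun t => f (t + h)) k = fourier k h * fourierCoeff f k := by
  simp only [fourierCoeff]
  rw [← integral_const_mul]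
  rw [← integral_add_right_eq_self (μ := haarC) (fun t => fourier k h * (fourier (-k) t • f t)) h]
  refine integral_congr_ae (ae_of_all _ fun t => ?_)
  simp only [smul_eq_mul]
  rw [fourier_add_arg (-k)]
  have : fourier k h * fourier (-k) h = 1 := by
    rw [← fourier_add]; simp
  linear_combination (-(fourier (-k) t * f (t + h))) * this

lemma delta_lip (n : ℕ) (f : Circ → ℝ) (hf : LipschitzWith 1 f) :
    l2OpNorm (deltaMat n (toep n (fourierCoeff fun t => (f t : ℂ)) : Matrix (Fin n) (Fin n) ℂ)) ≤ 1 := by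
  rw [deltaMat_toep]
  have hfc := hf.continuous
  set F : Circ → ℂ := fun t => (f t : ℂ) with hF
  have hFc : Continuous F := by fun_prop
  let d : ℝ → ℤ → ℂ := fun h k => ((h : ℂ)⁻¹ * (fourier k (h : Circ) - 1)) * (-Complex.I) * fourierCoeff F k
  have hd : ∀ h : ℝ, l2OpNorm (toep n (d h) : Matrix (Fin n) (Fin n) ℂ) ≤ 1 := by
    intro h
    have e : d h = fourierCoeff (fun t => ((h : ℂ)⁻¹ * (-Complex.I)) * (F (t + (h : Circ)) - F t)) := by
      funext k
      rw [fourierCoeff.const_mul]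
      have : fourierCoeff (fun t => F (t + (h : Circ)) - F t) k
          = fourierCoeff (fun t => F (t + (h : Circ))) k - fourierCoeff F k := by
        simp only [fourierCoeff, smul_sub]
        exact integral_sub (cont_integrable (by fun_prop) _) (cont_integrable (by fun_prop) _)
      rw [this, fourierCoeff_shift]
      simp only [d]; ring
    rw [e]
    refine toep_norm_le n _ (by fun_prop) 1 zero_le_one fun t => ?_
    have h1 : ‖F (t + (h : Circ)) - F t‖ ≤ |h| := by
      rw [hF, ← Complex.ofReal_sub, Complex.norm_real, ← dist_eq_norm]
      refine (hf.dist_le_mul _ _).trans ?_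
      rw [NNReal.coe_one, one_mul, dist_eq_norm, add_sub_cancel_left]
      exact QuotientAddGroup.norm_mk_le_norm
    rw [norm_mul, norm_mul, norm_neg, Complex.norm_I, mul_one, norm_inv, Complex.norm_real,
      Real.norm_eq_abs]
    rcases eq_or_ne h 0 with rfl | h0
    · simp
    · rw [inv_mul_le_iff₀ (abs_pos.2 h0), mul_one]; exact h1
  have hlim : ∀ k : ℤ, Tendsto (fun h => d h k) (nhdsWithin 0 {0}ᶜ) (nhds ((k : ℂ) * fourierCoeff F k)) := by
    intro k
    have h1 := hasDerivAt_fourier (2 * Real.pi) k 0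
    rw [hasDerivAt_iff_tendsto_slope] at h1
    have h2 := (h1.mul_const (-Complex.I)).mul_const (fourierCoeff F k)
    have hpi : (Real.pi : ℂ) ≠ 0 := by exact_mod_cast Real.pi_ne_zero
    have e : 2 * (Real.pi : ℂ) * Complex.I * k / ((2 * Real.pi : ℝ) : ℂ) = Complex.I * k := by
      push_cast
      field_simp
    have e2 : Complex.I * k * fourier k ((0 : ℝ) : Circ) * (-Complex.I) = k := by
      rw [AddCircle.coe_zero, fourier_eval_zero]
      linear_combination (-(k : ℂ)) * Complex.I_mul_I
    rw [e, e2] at h2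
    refine h2.congr fun h => ?_
    simp only [slope, d, vsub_eq_sub, sub_zero, AddCircle.coe_zero, fourier_eval_zero,
      Complex.real_smul, Complex.ofReal_inv]
  refine l2OpNorm_le_of_sq _ _ zero_le_one fun y => ?_
  rw [one_pow, one_mul]
  have hl : Tendsto (fun h => ∑ j, ‖((toep n (d h) : Matrix (Fin n) (Fin n) ℂ).mulVec y) j‖ ^ 2)
      (nhdsWithin 0 {0}ᶜ) (nhds (∑ j, ‖((toep n (fun k => (k : ℂ) * fourierCoeff F k) :
        Matrix (Fin n) (Fin n) ℂ).mulVec y) j‖ ^ 2)) := by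
    refine tendsto_finsetSum _ fun j _ => ?_
    refine Tendsto.pow (Tendsto.norm ?_) 2
    simp only [Matrix.mulVec, dotProduct, toep_apply]
    exact tendsto_finsetSum _ fun l _ => (hlim _).mul_const _
  refine le_of_tendsto hl (Eventually.of_forall fun h => ?_)
  refine (l2OpNorm_mulVec_sq _ y).trans ?_
  have := pow_le_one₀ (n := 2) (l2OpNorm_nonneg (toep n (d h) : Matrix (Fin n) (Fin n) ℂ)) (hd h)
  exact mul_le_of_le_one_left (by positivity) this

lemma mapB_contract (n : ℕ) (hn : 0 < n) (φ ψ : ToeplitzState n) :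
    kantorovichDist (mapB n hn φ) (mapB n hn ψ) ≤ toeplitzStateDist n φ ψ := by
  refine kdist_le _ _ _ fun f hf => ?_
  have h := le_tdist φ ψ _ (delta_lip n f hf)
  rw [← mapB_integral_real n hn φ f hf.continuous, ← mapB_integral_real n hn ψ f hf.continuous,
    ← Complex.ofReal_sub, Complex.norm_real] at h
  exact h

end Contraction
section Approx

lemma conv_sig (n : ℕ) (c : ℤ → ℂ) (g : Circ → ℂ) (hg : Continuous g) :
    ∫ t, g t * sig n (toep n c) t ∂haarC = ∑ k ∈ Finset.Ioo (-(n : ℤ)) n,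
      (1 / n : ℂ) * (((n : ℂ) - |(k : ℝ)|) * (c k * fourierCoeff g (-k))) := by
  simp only [sig_toep, Finset.mul_sum]
  rw [integral_finsetSum _ fun k _ => cont_integrable (by fun_prop) _]
  refine Finset.sum_congr rfl fun k _ => ?_
  rw [fourierCoeff, ← integral_const_mul, ← integral_const_mul, ← integral_const_mul]
  refine integral_congr_ae (Eventually.of_forall fun t => ?_)
  simp only [neg_neg, smul_eq_mul]
  ring

lemma fourierCoeff_fourier_apply (m k : ℤ) :
    fourierCoeff (fun t : Circ => fourier m t) k = if k = m then 1 else 0 := by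
  have := fourierCoeff_fourier (T := 2 * Real.pi) m
  have h2 : fourierCoeff (fun t : Circ => fourier m t) k = (Pi.single m (1:ℂ) : ℤ → ℂ) k := by
    rw [← this]
  rw [h2, Pi.single_apply]

lemma conv_fourier (n : ℕ) (c : ℤ → ℂ) (m : ℤ) (hm : m ∈ Finset.Ioo (-(n : ℤ)) n) :
    ∫ t, fourier (-m) t * sig n (toep n c) t ∂haarC =
      (1 / n : ℂ) * (((n : ℂ) - |(m : ℝ)|) * c m) := by
  rw [conv_sig n c (fun t => fourier (-m) t) (by fun_prop), Finset.sum_eq_single m]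
  · rw [fourierCoeff_fourier_apply, if_pos rfl, mul_one]
  · intro k _ hk
    rw [fourierCoeff_fourier_apply, if_neg (by omega)]; simp
  · intro h; exact absurd hm h

lemma AB_close (n : ℕ) (hn : 0 < n) (φ : ToeplitzState n) :
    toeplitzStateDist n (mapA n hn (mapB n hn φ)) φ ≤ 1 / Real.sqrt n := by
  refine tdist_le _ _ _ fun T hT => ?_
  obtain ⟨c, rfl⟩ := toep_surj n T
  have hn' : (n : ℂ) ≠ 0 := by exact_mod_cast hn.ne'
  rw [mapA_apply, mapB_integral n hn φ _ (sig_continuous n _), ← map_sub, ← map_sub]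
  have e : toep n (fourierCoeff (sig n (toep n c)) - c)
      = toep n fun k => -((|(k : ℝ)| : ℝ) / n : ℂ) * c k := by
    refine toep_congr fun k hk => ?_
    have := conv_fourier n c k hk
    rw [Pi.sub_apply]
    have h2 : fourierCoeff (sig n (toep n c)) k =
      (1 / n : ℂ) * (((n : ℂ) - |(k : ℝ)|) * c k) := by
      rw [← this]; rfl
    rw [h2]; field_simp; ring
  rw [e]
  refine (state_norm_le φ _).trans ?_
  have hb := schur_bound (toep n fun k => -((|(k : ℝ)| : ℝ) / n : ℂ) * c k : toeplitzSubmodule n).1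
    (deltaMat n (toep n c : Matrix (Fin n) (Fin n) ℂ)) (1 / n) (by positivity) (by
      intro j l
      rw [deltaMat_toep, toep_apply, toep_apply, norm_mul, norm_mul, norm_neg, norm_div,
        Complex.norm_real, Complex.norm_natCast, Complex.norm_intCast, Real.norm_eq_abs, abs_abs]
      apply le_of_eq; ring)
  refine hb.trans ?_
  have hs : 0 < Real.sqrt n := Real.sqrt_pos.2 (by exact_mod_cast hn)
  have hsq : Real.sqrt n * Real.sqrt n = n := Real.mul_self_sqrt (by positivity)
  have : 1 / (n : ℝ) * Real.sqrt n = 1 / Real.sqrt n := by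
    rw [← hsq]; field_simp
    simp
  rw [this]
  exact mul_le_of_le_one_right (by positivity) hT

/-- Fejer kernel as a real function. -/
noncomputable def fej (n : ℕ) (t : Circ) : ℝ := (sig n (toep n fun _ => 1) t).re

lemma toep_const_one (n : ℕ) : (toep n fun _ => 1) = toepE n 0 := by
  rw [toepE]; congr 1; funext k; simp

lemma fej_nonneg (n : ℕ) (t : Circ) : 0 ≤ fej n t := by
  rw [fej, toep_const_one]
  exact (Complex.le_def.1 (sig_nonneg n _ (toepE_psd n 0) t)).1

lemma fej_coe (n : ℕ) (t : Circ) : (fej n t : ℂ) = sig n (toep n fun _ => 1) t := by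
  have := (Complex.le_def.1 (sig_nonneg n _ (toepE_psd n 0) t)).2
  rw [← toep_const_one] at this
  apply Complex.ext
  · rfl
  · rw [Complex.ofReal_im]; exact this

lemma fej_continuous (n : ℕ) : Continuous (fej n) :=
  Complex.continuous_re.comp (sig_continuous n _)

lemma fej_int (n : ℕ) (hn : 0 < n) : ∫ t, fej n t ∂haarC = 1 := by
  have hn' : (n : ℂ) ≠ 0 := by exact_mod_cast hn.ne'
  have h := conv_fourier n (fun _ => 1) 0 (by rw [Finset.mem_Ioo]; omega)
  have : ((∫ t, fej n t ∂haarC : ℝ) : ℂ) = 1 := by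
    rw [← integral_complex_ofReal]
    simp only [fej_coe]
    simpa [hn'] using h
  exact_mod_cast this

lemma fej_int_cos (n : ℕ) (hn : 0 < n) :
    ∫ t, (fourier 1 t : ℂ).re * fej n t ∂haarC = 1 - 1 / n := by
  have hn' : (n : ℂ) ≠ 0 := by exact_mod_cast hn.ne'
  have h : ∫ t : Circ, fourier 1 t * (fej n t : ℂ) ∂haarC = ((1 - 1 / n : ℝ) : ℂ) := by
    simp only [fej_coe]
    rcases Nat.lt_or_ge 1 n with h1 | h1
    · have h := conv_fourier n (fun _ => 1) (-1) (by rw [Finset.mem_Ioo]; omega)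
      rw [neg_neg] at h
      rw [h]; push_cast; simp; field_simp
    · obtain rfl : n = 1 := by omega
      rw [conv_sig 1 _ (fun t => fourier 1 t) (by fun_prop)]
      simp only [fourierCoeff_fourier_apply]
      rw [Finset.sum_eq_zero]
      · simp
      · intro k hk
        rw [Finset.mem_Ioo] at hk
        rw [if_neg (by push_cast at hk; omega)]; simp
  have h2 := congrArg Complex.re h
  rw [Complex.ofReal_re] at h2
  rw [← h2]
  have hfc := fej_continuous n
  have h3 := integral_re (𝕜 := ℂ) (f := fun t : Circ => fourier 1 t * (fej n t : ℂ)) (μ := haarC)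
    (cont_integrable (by fun_prop) _)
  refine Eq.trans ?_ h3
  refine integral_congr_ae (Eventually.of_forall fun t => ?_)
  simp

lemma circ_norm_sq_le (t : Circ) : ‖t‖ ^ 2 ≤ (Real.pi ^ 2 / 2) * (1 - (fourier 1 t : ℂ).re) := by
  obtain ⟨s, rfl, hs⟩ := circ_lift t
  have hle := circ_norm_le (s : Circ)
  rw [← hs] at hle ⊢
  have h := Real.cos_le_one_sub_mul_cos_sq hle
  have e : (fourier 1 (s : Circ) : ℂ).re = Real.cos s := by
    rw [fourier_coe_apply]
    have hpi : (Real.pi : ℂ) ≠ 0 := by exact_mod_cast Real.pi_ne_zero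
    have : 2 * (Real.pi : ℂ) * Complex.I * ((1 : ℤ) : ℂ) * s / ((2 * Real.pi : ℝ) : ℂ)
        = s * Complex.I := by
      push_cast; field_simp
    rw [this, Complex.exp_ofReal_mul_I_re]
  rw [e, sq_abs]
  have hp : 0 < Real.pi ^ 2 := by positivity
  have : Real.pi ^ 2 / 2 * (2 / Real.pi ^ 2 * s ^ 2) = s ^ 2 := by field_simp
  nlinarith

lemma fej_moment (n : ℕ) (hn : 0 < n) :
    ∫ t : Circ, ‖t‖ * fej n t ∂haarC ≤ (1 / 2 + Real.pi ^ 2 / 4) * (1 / Real.sqrt n) := by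
  have hs : 0 < Real.sqrt n := Real.sqrt_pos.2 (by exact_mod_cast hn)
  have hsq : Real.sqrt n * Real.sqrt n = n := Real.mul_self_sqrt (by positivity)
  have hfc := fej_continuous n
  have hb : ∀ t : Circ, ‖t‖ * fej n t ≤ (1 / (2 * Real.sqrt n) + Real.sqrt n * (Real.pi ^ 2 / 4)) * fej n t
      - (Real.sqrt n * (Real.pi ^ 2 / 4)) * ((fourier 1 t : ℂ).re * fej n t) := by
    intro t
    have h1 := circ_norm_sq_le t
    have h2 : ‖t‖ ≤ 1 / (2 * Real.sqrt n) + Real.sqrt n / 2 * ‖t‖ ^ 2 := by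
      have : 0 ≤ (1 / (2 * Real.sqrt n)) * (1 - Real.sqrt n * ‖t‖) ^ 2 := by positivity
      have e : (1 / (2 * Real.sqrt n)) * (1 - Real.sqrt n * ‖t‖) ^ 2
        = 1 / (2 * Real.sqrt n) + Real.sqrt n / 2 * ‖t‖ ^ 2 - ‖t‖ := by field_simp; ring
      linarith
    have h3 : ‖t‖ ≤ 1 / (2 * Real.sqrt n) + Real.sqrt n / 2 *
        ((Real.pi ^ 2 / 2) * (1 - (fourier 1 t : ℂ).re)) := h2.trans (by gcongr)
    have h4 := mul_le_mul_of_nonneg_right h3 (fej_nonneg n t)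
    refine h4.trans (le_of_eq ?_)
    ring
  refine (integral_mono (cont_integrable (by fun_prop) _) (cont_integrable (by fun_prop) _) hb).trans ?_
  rw [integral_sub (cont_integrable (by fun_prop) _) (cont_integrable (by fun_prop) _),
    integral_const_mul, integral_const_mul, fej_int n hn, fej_int_cos n hn]
  apply le_of_eq
  have h1n : 1 / (n : ℝ) = (1 / Real.sqrt n) * (1 / Real.sqrt n) := by
    rw [one_div_mul_one_div, hsq]
  rw [h1n]; field_simp; ring

lemma sig_eq_conv (n : ℕ) (f : Circ → ℝ) (hf : Continuous f) (x : Circ) :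
    sig n (toep n (fourierCoeff fun t => (f t : ℂ))) x
      = ((∫ t, f (x - t) * fej n t ∂haarC : ℝ) : ℂ) := by
  rw [← integral_complex_ofReal]
  simp only [Complex.ofReal_mul, fej_coe]
  rw [conv_sig n _ (fun t => (f (x - t) : ℂ)) (by fun_prop), sig_toep]
  refine Finset.sum_congr rfl fun k _ => ?_
  congr 2
  rw [one_mul, fourierCoeff, fourierCoeff, ← integral_mul_const]
  have := integral_sub_left_eq_self (fun t : Circ => fourier k t • (f (x - t) : ℂ)) haarC x
  simp only [neg_neg]
  rw [← this]
  refine integral_congr_ae (Eventually.of_forall fun t => ?_)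
  simp only [sub_sub_cancel, smul_eq_mul]
  rw [sub_eq_add_neg, fourier_add_arg]
  have : fourier k (-t) = fourier (-k) t := by simp [fourier_apply]
  rw [this]; ring

lemma BA_close (n : ℕ) (hn : 0 < n) (μ : ProbabilityMeasure Circ) :
    kantorovichDist (mapB n hn (mapA n hn μ)) μ
      ≤ (1 / 2 + Real.pi ^ 2 / 4) * (1 / Real.sqrt n) := by
  refine kdist_le _ _ _ fun f hf => ?_
  have hfc := fej_continuous n
  have hfco : Continuous f := hf.continuous
  set G : Circ → ℝ := fun x => ∫ t, f (x - t) * fej n t ∂haarC with hG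
  have hGs : ∀ x, (G x : ℂ) = sig n (toep n (fourierCoeff fun t => (f t : ℂ))) x :=
    fun x => (sig_eq_conv n f hfco x).symm
  have hGc : Continuous G := by
    have : G = fun x => (sig n (toep n (fourierCoeff fun t => (f t : ℂ))) x).re := by
      funext x; rw [← hGs]; rfl
    rw [this]
    exact Complex.continuous_re.comp (sig_continuous n _)
  have e : ∫ x, f x ∂(mapB n hn (mapA n hn μ) : Measure Circ) = ∫ x, G x ∂(μ : Measure Circ) := by
    have h1 := mapB_integral_real n hn (mapA n hn μ) f hfco
    rw [mapA_apply] at h1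
    simp only [← hGs] at h1
    rw [integral_complex_ofReal] at h1
    exact_mod_cast h1
  rw [e, ← integral_sub (cont_integrable hGc _) (cont_integrable hfco _), ← Real.norm_eq_abs]
  have hpt : ∀ x, ‖G x - f x‖ ≤ (1 / 2 + Real.pi ^ 2 / 4) * (1 / Real.sqrt n) := by
    intro x
    have e1 : G x - f x = ∫ t, (f (x - t) - f x) * fej n t ∂haarC := by
      have : f x = ∫ t, f x * fej n t ∂haarC := by
        rw [integral_const_mul, fej_int n hn, mul_one]
      simp only [sub_mul]
      rw [integral_sub (cont_integrable (by fun_prop) _) (cont_integrable (by fun_prop) _), ← this]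
    rw [e1]
    refine (norm_integral_le_integral_norm _).trans ?_
    refine le_trans (integral_mono (cont_integrable (by fun_prop) _)
      (cont_integrable (by fun_prop) _) fun t => ?_) (fej_moment n hn)
    show ‖(f (x - t) - f x) * fej n t‖ ≤ ‖t‖ * fej n t
    rw [norm_mul, Real.norm_of_nonneg (fej_nonneg n t)]
    refine mul_le_mul_of_nonneg_right ?_ (fej_nonneg n t)
    rw [← dist_eq_norm]
    refine (hf.dist_le_mul _ _).trans ?_
    rw [NNReal.coe_one, one_mul, dist_eq_norm, sub_sub_cancel_left, norm_neg]
  refine (norm_integral_le_of_norm_le_const (Eventually.of_forall hpt)).trans ?_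
  simp

end Approx
section Final

lemma kdist_triangle (μ ν ρ : ProbabilityMeasure Circ) :
    kantorovichDist μ ρ ≤ kantorovichDist μ ν + kantorovichDist ν ρ :=
  kantMetric.dist_triangle μ ν ρ

lemma kdist_comm (μ ν : ProbabilityMeasure Circ) :
    kantorovichDist μ ν = kantorovichDist ν μ := kantMetric.dist_comm μ ν

lemma tdist_triangle {n : ℕ} (μ ν ρ : ToeplitzState n) :
    toeplitzStateDist n μ ρ ≤ toeplitzStateDist n μ ν + toeplitzStateDist n ν ρ :=
  (toeplitzMetric n).dist_triangle μ ν ρ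

lemma tdist_comm {n : ℕ} (μ ν : ToeplitzState n) :
    toeplitzStateDist n μ ν = toeplitzStateDist n ν μ := (toeplitzMetric n).dist_comm μ ν

lemma kdist_le_sum (n : ℕ) (hn : 0 < n) (μ ν : ProbabilityMeasure Circ) :
    kantorovichDist μ ν ≤ 2 * ((1 / 2 + Real.pi ^ 2 / 4) * (1 / Real.sqrt n)) +
      ∑ k ∈ Finset.Ioo (-(n : ℤ)) n, ‖∫ x, sig n (tau n k) x ∂(μ : Measure Circ)
        - ∫ x, sig n (tau n k) x ∂(ν : Measure Circ)‖ := by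
  have h1 := kdist_triangle μ (mapB n hn (mapA n hn μ)) ν
  have h2 := kdist_triangle (mapB n hn (mapA n hn μ)) (mapB n hn (mapA n hn ν)) ν
  have h3 := BA_close n hn μ
  have h4 := BA_close n hn ν
  rw [kdist_comm] at h3
  have h5 := mapB_contract n hn (mapA n hn μ) (mapA n hn ν)
  have h6 := tdist_le_sum (mapA n hn μ) (mapA n hn ν)
  simp only [mapA_apply] at h6
  linarith

lemma bound_tendsto (C : ℝ) :
    Tendsto (fun n : ℕ => C * (1 / Real.sqrt ((n + 1 : ℕ) : ℝ))) atTop (nhds 0) := by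
  have h1 : Tendsto (fun n : ℕ => Real.sqrt ((n + 1 : ℕ) : ℝ)) atTop atTop :=
    Real.tendsto_sqrt_atTop.comp ((tendsto_natCast_atTop_atTop (R := ℝ)).comp (tendsto_add_atTop_nat 1))
  have h2 := (tendsto_inv_atTop_zero.comp h1).const_mul C
  rw [mul_zero] at h2
  simpa only [Function.comp_def, one_div] using h2

lemma kdist_tendsto (ν : ProbabilityMeasure Circ) :
    Tendsto (fun μ => kantorovichDist μ ν) (nhds ν) (nhds 0) := by
  rw [Metric.tendsto_nhds]
  intro ε hε
  have hb := bound_tendsto (2 * (1 / 2 + Real.pi ^ 2 / 4))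
  obtain ⟨m, hm⟩ := (hb.eventually (gt_mem_nhds (half_pos hε))).exists
  have hs : Tendsto (fun μ : ProbabilityMeasure Circ => ∑ k ∈ Finset.Ioo (-((m + 1 : ℕ) : ℤ)) (m + 1 : ℕ),
      ‖∫ x, sig (m + 1) (tau (m + 1) k) x ∂(μ : Measure Circ)
        - ∫ x, sig (m + 1) (tau (m + 1) k) x ∂(ν : Measure Circ)‖) (nhds ν) (nhds 0) := by
    have : (0 : ℝ) = ∑ k ∈ Finset.Ioo (-((m + 1 : ℕ) : ℤ)) (m + 1 : ℕ), 0 := by simp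
    rw [this]
    refine tendsto_finsetSum _ fun k _ => ?_
    have h0 := (ProbabilityMeasure.tendsto_iff_forall_integral_rclike_tendsto ℂ).1
      (tendsto_id : Tendsto id (nhds ν) (nhds ν))
      (BoundedContinuousFunction.mkOfCompact ⟨_, sig_continuous (m + 1) (tau (m + 1) k)⟩)
    have h1 := (h0.sub_const (∫ x, sig (m + 1) (tau (m + 1) k) x ∂(ν : Measure Circ))).norm
    simpa using h1
  filter_upwards [hs.eventually (gt_mem_nhds (half_pos hε))] with μ hμ
  rw [Real.dist_eq, sub_zero, abs_of_nonneg (kdist_nonneg _ _)]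
  have := kdist_le_sum (m + 1) (Nat.succ_pos m) μ ν
  linarith

lemma compact_of_surj {X Y : Type*} [TopologicalSpace X] [CompactSpace X] [MetricSpace Y]
    (e : X → Y) (he : Function.Surjective e)
    (h : ∀ x₀, Tendsto (fun x => dist (e x) (e x₀)) (nhds x₀) (nhds 0)) : CompactSpace Y := by
  have hc : Continuous e := continuous_iff_continuousAt.2 fun x₀ =>
    tendsto_iff_dist_tendsto_zero.2 (h x₀)
  exact he.compactSpace hc

lemma kant_compact : @CompactSpace (ProbabilityMeasure Circ)
    kantMetric.toUniformSpace.toTopologicalSpace :=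
  @compact_of_surj (ProbabilityMeasure Circ) (ProbabilityMeasure Circ) _ _ kantMetric id
    Function.surjective_id kdist_tendsto

lemma gh_general {X Y : Type*} [MetricSpace X] [Nonempty X] [CompactSpace X]
    [MetricSpace Y] [Nonempty Y] [CompactSpace Y] (A : Y → X) (B : X → Y) (a b : ℝ)
    (hA : ∀ μ ν, dist (A μ) (A ν) ≤ dist μ ν) (hB : ∀ φ ψ, dist (B φ) (B ψ) ≤ dist φ ψ)
    (hAB : ∀ φ, dist (A (B φ)) φ ≤ a) (hBA : ∀ μ, dist (B (A μ)) μ ≤ b) :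
    GromovHausdorff.ghDist X Y ≤ a + b := by
  have := GromovHausdorff.ghDist_le_of_approx_subsets (s := (Set.univ : Set X))
    (fun x => B x.1) (ε₁ := 0) (ε₂ := 2 * a) (ε₃ := b)
    (fun x => ⟨x, Set.mem_univ _, by simp⟩)
    (fun y => ⟨⟨A y, Set.mem_univ _⟩, by rw [dist_comm]; exact hBA y⟩)
    (fun x y => by
      obtain ⟨x, _⟩ := x
      obtain ⟨y, _⟩ := y
      show |dist x y - dist (B x) (B y)| ≤ 2 * a
      have h1 := hB x y
      have h2 := hA (B x) (B y)
      have h3 := dist_triangle4 x (A (B x)) (A (B y)) y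
      have h4 := hAB x
      have h5 := hAB y
      rw [dist_comm] at h4
      rw [abs_of_nonneg (by linarith)]
      linarith)
  linarith

lemma prob_nonempty : Nonempty (ProbabilityMeasure Circ) :=
  ⟨⟨Measure.dirac 0, inferInstance⟩⟩

end Final

/-- Proposition 3.6: each state space `(S(𝒯_n), d_n)` (for `n ≥ 1`) is a nonempty compact
metric space, the probability measures `(P(S¹), d)` with the Kantorovich distance form a
nonempty compact metric space, and `(S(𝒯_n), d_n) → (P(S¹), d)` in Gromov–Hausdorff
distance as `n → ∞`. -/
theorem toeplitzStates_GH_converge :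
    ∃ (instT : ∀ n : ℕ, MetricSpace (ToeplitzState (n + 1)))
      (instP : MetricSpace (ProbabilityMeasure (AddCircle (2 * Real.pi))))
      (hneT : ∀ n : ℕ, Nonempty (ToeplitzState (n + 1)))
      (hneP : Nonempty (ProbabilityMeasure (AddCircle (2 * Real.pi))))
      (hcT : ∀ n : ℕ, @CompactSpace (ToeplitzState (n + 1))
        (instT n).toUniformSpace.toTopologicalSpace)
      (hcP : @CompactSpace (ProbabilityMeasure (AddCircle (2 * Real.pi)))
        instP.toUniformSpace.toTopologicalSpace),
      (∀ (n : ℕ) (φ ψ : ToeplitzState (n + 1)),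
        @dist _ (instT n).toDist φ ψ = toeplitzStateDist (n + 1) φ ψ) ∧
      (∀ μ ν : ProbabilityMeasure (AddCircle (2 * Real.pi)),
        @dist _ instP.toDist μ ν = kantorovichDist μ ν) ∧
      Tendsto (fun n : ℕ =>
          @GromovHausdorff.ghDist (ToeplitzState (n + 1))
            (ProbabilityMeasure (AddCircle (2 * Real.pi)))
            (instT n) (hneT n) (hcT n) instP hneP hcP)
        atTop (nhds 0) := by
  refine ⟨fun n => toeplitzMetric (n + 1), kantMetric,
    fun n => prob_nonempty.map (mapA (n + 1) (Nat.succ_pos n)), prob_nonempty,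
    fun n => toeplitz_compact (n + 1), kant_compact, fun _ _ _ => rfl, fun _ _ => rfl, ?_⟩
  have hb := (bound_tendsto 1).add (bound_tendsto (1 / 2 + Real.pi ^ 2 / 4))
  rw [add_zero] at hb
  refine squeeze_zero (fun n => ?_) (fun n => ?_) hb
  · let _ := toeplitzMetric (n + 1)
    let _ := kantMetric
    exact dist_nonneg
  · exact @gh_general _ _ (toeplitzMetric (n + 1))
      (prob_nonempty.map (mapA (n + 1) (Nat.succ_pos n))) (toeplitz_compact (n + 1)) kantMetric prob_nonempty
      kant_compact (mapA (n + 1) (Nat.succ_pos n)) (mapB (n + 1) (Nat.succ_pos n)) _ _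
      (mapA_contract _ _) (mapB_contract _ _)
      (fun φ => (AB_close _ _ φ).trans (le_of_eq (one_mul _).symm)) (BA_close _ _)
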